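/- Let n ≥ 1 and let p ∈ ℝⁿ satisfy a Diophantine condition. Let f : ℝⁿ → ℝ be smooth and ℤⁿ-periodic with ∫_{[0,1]ⁿ} f(x) dx = 0. Then there exists a smooth ℤⁿ-periodic function φ : ℝⁿ → ℝ such that p·∇φ(x) = f(x) for all x ∈ ℝⁿ. -/

import Mathlib

open scoped RealInnerProductSpace

/-!
The equation is solved mode by mode: `∂_p` multiplies the `k`-th Fourier mode by `2πi k · p`, so
the coefficients of `φ` must be those of `f` divided by `2πi k · p` for `k ≠ 0`, and the mode
`k = 0` is harmless because `f` has mean zero. Smoothness of a periodic function amounts to decay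
of its coefficients faster than any power of `|k|`, a property that survives multiplication by a
factor of polynomial growth, and the Diophantine condition says that the reciprocals of the small
divisors `k · p` grow at most polynomially.
-/

noncomputable section

open Filter MeasureTheory Topology
open scoped ContDiff

variable {ι F : Type*}

/-- The point of `ℝ^ι` with integer coordinates `k`. Fourier modes are indexed by `ι → ℤ` but
measured by the Euclidean norm of this vector, the one in the Diophantine condition. -/
def latticeVec (k : ι → ℤ) : EuclideanSpace ℝ ι := WithLp.toLp 2 fun i => (k i : ℝ)

/-- `f` is `ℤ^ι`-periodic. -/
def IsZPeriodic (f : EuclideanSpace ℝ ι → F) : Prop :=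
  ∀ x (k : ι → ℤ), f (x + latticeVec k) = f x

variable (ι) in
/-- The closed unit cube, over which Fourier coefficients are computed. -/
def unitCube : Set (EuclideanSpace ℝ ι) := {x | ∀ i, x i ∈ Set.Icc (0 : ℝ) 1}

theorem latticeVec_injective : Function.Injective (latticeVec (ι := ι)) := fun _ _ h =>
  funext fun i => Int.cast_injective (congrFun (congrArg WithLp.ofLp h) i)

theorem isCompact_unitCube : IsCompact (unitCube ι) := by
  have : unitCube ι = WithLp.ofLp ⁻¹' Set.Icc (0 : ι → ℝ) 1 := by
    ext x; simp [unitCube, Pi.le_def, forall_and]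
  rw [this]
  exact (PiLp.homeomorph 2 fun _ : ι => ℝ).isCompact_preimage.2 isCompact_Icc

section Torus

/-- The covering map `ℝ^ι → (ℝ/ℤ)^ι`. -/
def torusMk : C(EuclideanSpace ℝ ι, UnitAddTorus ι) where
  toFun x i := (x i : UnitAddCircle)
  continuous_toFun := by
    refine continuous_pi fun i => (AddCircle.continuous_mk' 1).comp ?_
    fun_prop

theorem torusMk_add (x y : EuclideanSpace ℝ ι) : torusMk (x + y) = torusMk x + torusMk y := rfl

theorem exists_add_latticeVec_eq_of_torusMk_eq {x y : EuclideanSpace ℝ ι}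
    (h : torusMk x = torusMk y) : ∃ k, x + latticeVec k = y := by
  have coord (i : ι) : ∃ m : ℤ, x i + m = y i := by
    obtain ⟨m, hm⟩ := (AddCircle.coe_eq_zero_iff 1).1
      (by rw [AddCircle.coe_sub, sub_eq_zero]; exact (congrFun h i).symm :
        ((y i - x i : ℝ) : UnitAddCircle) = 0)
    exact ⟨m, by rw [zsmul_eq_mul, mul_one] at hm; linarith⟩
  choose k hk using coord
  exact ⟨k, PiLp.ext hk⟩

theorem isOpenQuotientMap_torusMk :
    IsOpenQuotientMap (torusMk : C(EuclideanSpace ℝ ι, UnitAddTorus ι)) :=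
  (IsOpenQuotientMap.piMap fun _ => QuotientAddGroup.isOpenQuotientMap_mk).comp
    (PiLp.homeomorph 2 fun _ : ι => ℝ).isOpenQuotientMap

theorem IsZPeriodic.factorsThrough_torusMk {f : EuclideanSpace ℝ ι → F} (hf : IsZPeriodic f) :
    Function.FactorsThrough f torusMk := fun x _ hxy => by
  obtain ⟨k, rfl⟩ := exists_add_latticeVec_eq_of_torusMk_eq hxy
  exact (hf x k).symm

/-- The continuous function on the torus induced by a continuous periodic function. -/
def IsZPeriodic.lift [TopologicalSpace F] {f : EuclideanSpace ℝ ι → F} (hf : IsZPeriodic f)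
    (hc : Continuous f) : C(UnitAddTorus ι, F) :=
  isOpenQuotientMap_torusMk.isQuotientMap.lift ⟨f, hc⟩ hf.factorsThrough_torusMk

theorem IsZPeriodic.lift_torusMk [TopologicalSpace F] {f : EuclideanSpace ℝ ι → F}
    (hf : IsZPeriodic f) (hc : Continuous f) (x : EuclideanSpace ℝ ι) :
    hf.lift hc (torusMk x) = f x :=
  ContinuousMap.congr_fun (isOpenQuotientMap_torusMk.isQuotientMap.lift_comp ⟨f, hc⟩
    hf.factorsThrough_torusMk) x

theorem IsZPeriodic.exists_norm_le [NormedAddCommGroup F] {f : EuclideanSpace ℝ ι → F}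
    (hf : IsZPeriodic f) (hc : Continuous f) : ∃ C, ∀ x, ‖f x‖ ≤ C :=
  ⟨‖hf.lift hc‖, fun x => hf.lift_torusMk hc x ▸ (hf.lift hc).norm_coe_le_norm _⟩

end Torus

theorem IsZPeriodic.fderiv_apply [Finite ι] [NormedAddCommGroup F] [NormedSpace ℝ F]
    {g : EuclideanSpace ℝ ι → F} (hg : IsZPeriodic g) (v : EuclideanSpace ℝ ι) :
    IsZPeriodic fun x => fderiv ℝ g x v := fun x k => by
  have := Fintype.ofFinite ι
  change fderiv ℝ g (x + latticeVec k) v = fderiv ℝ g x v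
  rw [← fderiv_comp_add_right, funext fun y => hg y k]

variable [Fintype ι]

/-- The Diophantine condition `|p · k| ≥ c |k|^{-γ}` on the frequency vector `p`. -/
def IsDiophantine (p : EuclideanSpace ℝ ι) : Prop :=
  ∃ c > (0 : ℝ), ∃ γ > (0 : ℝ), ∀ k : ι → ℤ, k ≠ 0 → c / ‖latticeVec k‖ ^ γ ≤ |⟪latticeVec k, p⟫|

theorem integrableOn_unitCube [NormedAddCommGroup F] {g : EuclideanSpace ℝ ι → F}
    (hc : Continuous g) : IntegrableOn g (unitCube ι) :=
  hc.continuousOn.integrableOn_compact isCompact_unitCube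

theorem inner_latticeVec (k : ι → ℤ) (x : EuclideanSpace ℝ ι) :
    ⟪latticeVec k, x⟫ = ∑ i, x i * (k i : ℝ) := by
  simp [latticeVec, PiLp.inner_apply]

theorem norm_latticeVec (k : ι → ℤ) : ‖latticeVec k‖ = √(∑ i, (k i : ℝ) ^ 2) := by
  simp [latticeVec, EuclideanSpace.norm_eq]

theorem one_le_norm_latticeVec {k : ι → ℤ} (hk : k ≠ 0) : 1 ≤ ‖latticeVec k‖ := by
  obtain ⟨i, hi⟩ := Function.ne_iff.mp hk
  calc (1 : ℝ) ≤ ‖(k i : ℝ)‖ := by rw [Real.norm_eq_abs]; exact_mod_cast Int.one_le_abs hi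
    _ ≤ ‖latticeVec k‖ := PiLp.norm_apply_le (latticeVec k) i

theorem norm_latticeVec_le_sum_abs (k : ι → ℤ) : ‖latticeVec k‖ ≤ ∑ i, |(k i : ℝ)| := by
  rw [← (EuclideanSpace.basisFun ι ℝ).sum_repr (latticeVec k)]
  refine (norm_sum_le _ _).trans_eq (Finset.sum_congr rfl fun i _ => ?_)
  rw [norm_smul, OrthonormalBasis.norm_eq_one, mul_one]
  rfl

theorem summable_inv_norm_latticeVec_pow {m : ℕ} (hm : Fintype.card ι < m) :
    Summable fun k : ι → ℤ => ‖latticeVec k‖⁻¹ ^ m := by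
  let b := (EuclideanSpace.basisFun ι ℝ).toBasis
  let L := Submodule.span ℤ (Set.range b)
  have mem_L (k : ι → ℤ) : latticeVec k ∈ L :=
    (b.mem_span_iff_repr_mem ℤ _).2 fun i => ⟨k i, by simp [b, latticeVec]⟩
  have hL : Module.finrank ℤ L < m := by rwa [ZLattice.rank ℝ L, finrank_euclideanSpace]
  exact (ZLattice.summable_norm_pow_inv L m hL).comp_injective
    (i := fun k => (⟨latticeVec k, mem_L k⟩ : L))
    fun _ _ h => latticeVec_injective (congrArg Subtype.val h)

theorem isDiophantine_iff (p : EuclideanSpace ℝ ι) :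
    IsDiophantine p ↔ ∃ c > (0 : ℝ), ∃ γ > (0 : ℝ), ∀ k : ι → ℤ, k ≠ 0 →
      |∑ i, p i * (k i : ℝ)| ≥ c / √(∑ i, (k i : ℝ) ^ 2) ^ γ := by
  simp only [IsDiophantine, inner_latticeVec, norm_latticeVec, ge_iff_le]

namespace IsDiophantine

theorem inner_ne_zero {p : EuclideanSpace ℝ ι} (hp : IsDiophantine p) {k : ι → ℤ} (hk : k ≠ 0) :
    ⟪latticeVec k, p⟫ ≠ 0 := by
  obtain ⟨c, hc, γ, -, h⟩ := hp
  have hk_pos : 0 < ‖latticeVec k‖ := zero_lt_one.trans_le (one_le_norm_latticeVec hk)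
  exact abs_pos.1 ((by positivity : 0 < c / ‖latticeVec k‖ ^ γ).trans_le (h k hk))

-- The bound also covers `k = 0`, where `0⁻¹ = 0`.
theorem exists_inv_abs_inner_le {p : EuclideanSpace ℝ ι} (hp : IsDiophantine p) :
    ∃ (B : ℝ) (M : ℕ), ∀ k, |⟪latticeVec k, p⟫|⁻¹ ≤ B * ‖latticeVec k‖ ^ M := by
  obtain ⟨c, hc, γ, -, h⟩ := hp
  refine ⟨c⁻¹, ⌈γ⌉₊, fun k => ?_⟩
  obtain rfl | hk := eq_or_ne k 0
  · rw [inner_latticeVec]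
    simp only [Pi.zero_apply, Int.cast_zero, mul_zero, Finset.sum_const_zero, abs_zero, inv_zero]
    positivity
  have one_le_norm := one_le_norm_latticeVec hk
  have divisor_pos : 0 < c / ‖latticeVec k‖ ^ γ :=
    div_pos hc (Real.rpow_pos_of_pos (zero_lt_one.trans_le one_le_norm) γ)
  calc |⟪latticeVec k, p⟫|⁻¹ ≤ (c / ‖latticeVec k‖ ^ γ)⁻¹ := inv_anti₀ divisor_pos (h k hk)
    _ = c⁻¹ * ‖latticeVec k‖ ^ γ := by rw [inv_div, div_eq_inv_mul]
    _ ≤ c⁻¹ * ‖latticeVec k‖ ^ (⌈γ⌉₊ : ℝ) := by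
        gcongr
        exact Nat.le_ceil γ
    _ = c⁻¹ * ‖latticeVec k‖ ^ ⌈γ⌉₊ := by rw [Real.rpow_natCast]

end IsDiophantine

section RapidDecay

variable {G : Type*} [NormedAddCommGroup F] [NormedAddCommGroup G]

/-- Decay of a multi-indexed sequence faster than any power of the frequency: the condition on
Fourier coefficients that corresponds to smoothness. -/
def RapidlyDecreasing (a : (ι → ℤ) → F) : Prop :=
  ∀ N : ℕ, ∃ C : ℝ, ∀ k, ‖latticeVec k‖ ^ N * ‖a k‖ ≤ C

namespace RapidlyDecreasing

theorem of_norm_le {a : (ι → ℤ) → F} (ha : RapidlyDecreasing a) {b : (ι → ℤ) → G} {B : ℝ} {M : ℕ}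
    (hb : ∀ k, ‖b k‖ ≤ B * ‖latticeVec k‖ ^ M * ‖a k‖) : RapidlyDecreasing b := fun N => by
  obtain ⟨C, hC⟩ := ha (N + M)
  refine ⟨|B| * C, fun k => ?_⟩
  calc ‖latticeVec k‖ ^ N * ‖b k‖
      ≤ ‖latticeVec k‖ ^ N * (|B| * ‖latticeVec k‖ ^ M * ‖a k‖) := by
        gcongr; exact (hb k).trans (by gcongr; exact le_abs_self B)
    _ = |B| * (‖latticeVec k‖ ^ (N + M) * ‖a k‖) := by ring
    _ ≤ |B| * C := by gcongr; exact hC k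

theorem summable_norm_pow_mul {a : (ι → ℤ) → F} (ha : RapidlyDecreasing a) (m : ℕ) :
    Summable fun k => ‖latticeVec k‖ ^ m * ‖a k‖ := by
  obtain ⟨C, hC⟩ := ha (m + (Fintype.card ι + 1))
  refine .of_norm_bounded_eventually
    ((summable_inv_norm_latticeVec_pow (Nat.lt_succ_self (Fintype.card ι))).mul_left C) ?_
  filter_upwards [eventually_cofinite_ne (0 : ι → ℤ)] with k hk
  have norm_pos : 0 < ‖latticeVec k‖ := zero_lt_one.trans_le (one_le_norm_latticeVec hk)
  rw [Real.norm_of_nonneg (by positivity), inv_pow, ← div_eq_mul_inv, le_div_iff₀ (by positivity),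
    mul_right_comm, ← pow_add]
  exact hC k

theorem summable_norm {a : (ι → ℤ) → F} (ha : RapidlyDecreasing a) : Summable fun k => ‖a k‖ := by
  simpa only [pow_zero, one_mul] using ha.summable_norm_pow_mul 0

theorem summable_norm_mul {a : (ι → ℤ) → F} (ha : RapidlyDecreasing a) :
    Summable fun k => ‖latticeVec k‖ * ‖a k‖ := by
  simpa only [pow_one] using ha.summable_norm_pow_mul 1

end RapidlyDecreasing

end RapidDecay

section Phase

/-- The phase `x ↦ 2πi k · x` of the `k`-th Fourier mode, so that the mode itself is
`x ↦ exp (phase k x)`. As a function of a direction `v` it is also the symbol of `∂_v`. -/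
def phase (k : ι → ℤ) : EuclideanSpace ℝ ι →L[ℝ] ℂ :=
  (2 * Real.pi * Complex.I) • Complex.ofRealCLM ∘L innerSL ℝ (latticeVec k)

theorem phase_apply (k : ι → ℤ) (x : EuclideanSpace ℝ ι) :
    phase k x = 2 * Real.pi * Complex.I * (⟪latticeVec k, x⟫ : ℝ) := rfl

theorem phase_neg (k : ι → ℤ) (x : EuclideanSpace ℝ ι) : phase (-k) x = -phase k x := by
  simp [phase_apply, inner_latticeVec]

theorem norm_phase_apply (k : ι → ℤ) (x : EuclideanSpace ℝ ι) :
    ‖phase k x‖ = 2 * Real.pi * |⟪latticeVec k, x⟫| := by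
  simp [phase_apply, abs_of_pos Real.pi_pos]

theorem norm_phase_le (k : ι → ℤ) : ‖phase k‖ ≤ 2 * Real.pi * ‖latticeVec k‖ := by
  refine ContinuousLinearMap.opNorm_le_bound _ (by positivity) fun x => ?_
  rw [norm_phase_apply, mul_assoc (2 * Real.pi)]
  gcongr
  exact abs_real_inner_le_norm _ _

theorem norm_exp_phase (k : ι → ℤ) (x : EuclideanSpace ℝ ι) : ‖Complex.exp (phase k x)‖ = 1 := by
  simp [Complex.norm_exp, phase_apply]

theorem isZPeriodic_exp_phase (k : ι → ℤ) : IsZPeriodic fun x => Complex.exp (phase k x) := by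
  intro x l
  have exp_phase_latticeVec : Complex.exp (phase k (latticeVec l)) = 1 :=
    Complex.exp_eq_one_iff.2 ⟨∑ i, l i * k i, by
      rw [phase_apply, inner_latticeVec]; simp [latticeVec, mul_comm]⟩
  simp only [map_add, Complex.exp_add, exp_phase_latticeVec, mul_one]

theorem hasFDerivAt_exp_phase (k : ι → ℤ) (x : EuclideanSpace ℝ ι) :
    HasFDerivAt (fun x => Complex.exp (phase k x)) (Complex.exp (phase k x) • phase k) x :=
  (phase k).hasFDerivAt.cexp

end Phase

section FourierSeries

variable [NormedAddCommGroup F] [NormedSpace ℂ F]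

/-- The sum of the Fourier series with coefficients `a`. -/
def fourierSeries (a : (ι → ℤ) → F) (x : EuclideanSpace ℝ ι) : F :=
  ∑' k, Complex.exp (phase k x) • a k

theorem isZPeriodic_fourierSeries (a : (ι → ℤ) → F) : IsZPeriodic (fourierSeries a) := fun x l =>
  tsum_congr fun k => congrArg (· • a k) (isZPeriodic_exp_phase k x l)

theorem norm_mode_fderiv_le (k : ι → ℤ) (c : F) (x : EuclideanSpace ℝ ι) :
    ‖(Complex.exp (phase k x) • phase k).smulRight c‖ ≤
      2 * Real.pi * (‖latticeVec k‖ * ‖c‖) := by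
  refine ContinuousLinearMap.opNorm_le_bound _ (by positivity) fun v => ?_
  calc ‖(Complex.exp (phase k x) * phase k v) • c‖ = ‖phase k v‖ * ‖c‖ := by
        rw [norm_smul, norm_mul, norm_exp_phase, one_mul]
    _ ≤ 2 * Real.pi * ‖latticeVec k‖ * ‖v‖ * ‖c‖ := by
        gcongr; exact (phase k).le_of_opNorm_le (norm_phase_le k) v
    _ = 2 * Real.pi * (‖latticeVec k‖ * ‖c‖) * ‖v‖ := by ring

namespace RapidlyDecreasing

variable {a : (ι → ℤ) → F}

theorem phase_smul (ha : RapidlyDecreasing a) (v : EuclideanSpace ℝ ι) :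
    RapidlyDecreasing fun k => phase k v • a k :=
  ha.of_norm_le (B := 2 * Real.pi * ‖v‖) (M := 1) fun k => by
    calc ‖phase k v • a k‖ ≤ ‖phase k‖ * ‖v‖ * ‖a k‖ := by
          rw [norm_smul]; gcongr; exact (phase k).le_opNorm v
      _ ≤ 2 * Real.pi * ‖latticeVec k‖ * ‖v‖ * ‖a k‖ := by gcongr; exact norm_phase_le k
      _ = 2 * Real.pi * ‖v‖ * ‖latticeVec k‖ ^ 1 * ‖a k‖ := by ring

variable [CompleteSpace F]

theorem summable_exp_phase_smul (ha : RapidlyDecreasing a) (x : EuclideanSpace ℝ ι) :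
    Summable fun k => Complex.exp (phase k x) • a k :=
  .of_norm (by simpa only [norm_smul, norm_exp_phase, one_mul] using ha.summable_norm)

theorem hasFDerivAt_fourierSeries (ha : RapidlyDecreasing a) (x : EuclideanSpace ℝ ι) :
    HasFDerivAt (fourierSeries a)
      (∑' k, (Complex.exp (phase k x) • phase k).smulRight (a k)) x :=
  hasFDerivAt_tsum (ha.summable_norm_mul.mul_left (2 * Real.pi))
    (fun k x => (hasFDerivAt_exp_phase k x).smul_const (a k))
    (fun k x => norm_mode_fderiv_le k (a k) x) (ha.summable_exp_phase_smul 0) x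

theorem fderiv_fourierSeries_apply (ha : RapidlyDecreasing a) (x v : EuclideanSpace ℝ ι) :
    fderiv ℝ (fourierSeries a) x v = fourierSeries (fun k => phase k v • a k) x := by
  have summable_fderiv : Summable fun k => (Complex.exp (phase k x) • phase k).smulRight (a k) :=
    .of_norm_bounded (ha.summable_norm_mul.mul_left (2 * Real.pi))
      fun k => norm_mode_fderiv_le k (a k) x
  rw [(ha.hasFDerivAt_fourierSeries x).fderiv,
    ← ContinuousLinearMap.apply_apply (𝕜 := ℝ) v, ContinuousLinearMap.map_tsum _ summable_fderiv]
  simp [fourierSeries, mul_smul]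

theorem contDiff_fourierSeries (ha : RapidlyDecreasing a) : ContDiff ℝ ∞ (fourierSeries a) := by
  refine contDiff_infty.2 fun n => ?_
  induction n generalizing a with
  | zero =>
    exact contDiff_zero.2
      (Differentiable.continuous fun x => (ha.hasFDerivAt_fourierSeries x).differentiableAt)
  | succ n ih =>
    rw [Nat.cast_succ, contDiff_succ_iff_fderiv_apply]
    refine ⟨fun x => (ha.hasFDerivAt_fourierSeries x).differentiableAt, by simp, fun v => ?_⟩
    simp only [ha.fderiv_fourierSeries_apply]
    exact ih (ha.phase_smul v)

end RapidlyDecreasing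

end FourierSeries

section FourierCoefficients

/- `UnitAddTorus.mFourierCoeff` integrates against Haar measure through instances local to its
file; the global volume on `UnitAddCircle` equals that measure but not definitionally. -/
local instance circleMeasureSpace : MeasureSpace UnitAddCircle := ⟨AddCircle.haarAddCircle⟩

local instance circleIsAddHaarMeasure : Measure.IsAddHaarMeasure (volume : Measure UnitAddCircle) :=
  inferInstanceAs (Measure.IsAddHaarMeasure AddCircle.haarAddCircle)

local instance circleIsProbabilityMeasure : IsProbabilityMeasure (volume : Measure UnitAddCircle) :=
  inferInstanceAs (IsProbabilityMeasure AddCircle.haarAddCircle)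

theorem mFourier_torusMk (k : ι → ℤ) (x : EuclideanSpace ℝ ι) :
    UnitAddTorus.mFourier k (torusMk x) = Complex.exp (phase k x) := by
  simp only [UnitAddTorus.mFourier, torusMk, ContinuousMap.coe_mk, fourier_coe_apply,
    ← Complex.exp_sum, phase_apply, inner_latticeVec]
  push_cast
  rw [Finset.mul_sum]
  exact congrArg _ (Finset.sum_congr rfl fun i _ => by ring)

theorem integral_unitAddTorus_eq_setIntegral_unitCube [NormedAddCommGroup F] [NormedSpace ℝ F]
    (h : UnitAddTorus ι → F) : ∫ y, h y = ∫ x in unitCube ι, h (torusMk x) := by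
  have ae_eq : {x : ι → ℝ | ∀ i, x i ∈ Set.Ioc ((0 : ι → ℝ) i) ((0 : ι → ℝ) i + 1)} =ᵐ[volume]
      WithLp.toLp 2 ⁻¹' unitCube ι := by
    have half_open : {x : ι → ℝ | ∀ i, x i ∈ Set.Ioc ((0 : ι → ℝ) i) ((0 : ι → ℝ) i + 1)} =
        Set.univ.pi fun i => Set.Ioc ((0 : ι → ℝ) i) ((1 : ι → ℝ) i) := by ext x; simp
    have closed : WithLp.toLp 2 ⁻¹' unitCube ι = Set.Icc (0 : ι → ℝ) 1 := by
      ext x; simp [unitCube, Pi.le_def, forall_and]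
    rw [half_open, closed]
    exact Measure.univ_pi_Ioc_ae_eq_Icc
  rw [UnitAddTorus.integral_preimage h 0, setIntegral_congr_set ae_eq]
  exact (PiLp.volume_preserving_toLp ι).setIntegral_preimage_emb
    (MeasurableEquiv.toLp 2 (ι → ℝ)).measurableEmbedding (fun x => h (torusMk x)) (unitCube ι)

namespace IsZPeriodic

section Integration

variable [NormedAddCommGroup F] [NormedSpace ℝ F] {g : EuclideanSpace ℝ ι → F}

theorem setIntegral_unitCube_comp_add_right (hg : IsZPeriodic g) (hc : Continuous g)
    (w : EuclideanSpace ℝ ι) : ∫ x in unitCube ι, g (x + w) = ∫ x in unitCube ι, g x := by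
  simp only [← hg.lift_torusMk hc, torusMk_add]
  rw [← integral_unitAddTorus_eq_setIntegral_unitCube (hg.lift hc),
    ← integral_unitAddTorus_eq_setIntegral_unitCube fun y => hg.lift hc (y + torusMk w),
    integral_add_right_eq_self]

theorem setIntegral_unitCube_fderiv_apply (hg : IsZPeriodic g) (hs : ContDiff ℝ 1 g)
    (v : EuclideanSpace ℝ ι) : ∫ x in unitCube ι, fderiv ℝ g x v = 0 := by
  have fderiv_continuous : Continuous fun x => fderiv ℝ g x v :=
    (hs.continuous_fderiv one_ne_zero).clm_apply continuous_const
  obtain ⟨C, hC⟩ := (hg.fderiv_apply v).exists_norm_le fderiv_continuous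
  have hasDerivAt_line (x : EuclideanSpace ℝ ι) (t : ℝ) :
      HasDerivAt (fun t : ℝ => g (x + t • v)) (fderiv ℝ g (x + t • v) v) t :=
    (hs.differentiable one_ne_zero _).hasFDerivAt.comp_hasDerivAt t
      (by simpa using ((hasDerivAt_id t).smul_const v).const_add x)
  have hasDerivAt_integral : HasDerivAt (fun t : ℝ => ∫ x in unitCube ι, g (x + t • v))
      (∫ x in unitCube ι, fderiv ℝ g (x + (0 : ℝ) • v) v) 0 :=
    (hasDerivAt_integral_of_dominated_loc_of_deriv_le (bound := fun _ => C) univ_mem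
      (.of_forall fun t => (integrableOn_unitCube (by fun_prop)).aestronglyMeasurable)
      (integrableOn_unitCube (by fun_prop))
      (integrableOn_unitCube (by fun_prop)).aestronglyMeasurable
      (.of_forall fun x t _ => hC _)
      (integrableOn_unitCube continuous_const)
      (.of_forall fun x t _ => hasDerivAt_line x t)).2
  simp only [hg.setIntegral_unitCube_comp_add_right hs.continuous, zero_smul, add_zero]
    at hasDerivAt_integral
  exact hasDerivAt_integral.unique (hasDerivAt_const _ _)

end Integration

end IsZPeriodic

/-- The `k`-th Fourier coefficient of a `ℤ^ι`-periodic function. -/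
def fourierCoefficient [NormedAddCommGroup F] [NormedSpace ℂ F] (g : EuclideanSpace ℝ ι → F)
    (k : ι → ℤ) : F :=
  ∫ x in unitCube ι, Complex.exp (phase (-k) x) • g x

theorem fourierCoefficient_zero [NormedAddCommGroup F] [NormedSpace ℂ F]
    (g : EuclideanSpace ℝ ι → F) : fourierCoefficient g 0 = ∫ x in unitCube ι, g x := by
  simp [fourierCoefficient, phase_apply, inner_latticeVec]

namespace IsZPeriodic

section Coefficients

variable [NormedAddCommGroup F] [NormedSpace ℂ F] {g : EuclideanSpace ℝ ι → F}

theorem mFourierCoeff_lift (hg : IsZPeriodic g) (hc : Continuous g) (k : ι → ℤ) :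
    UnitAddTorus.mFourierCoeff (hg.lift hc) k = fourierCoefficient g k := by
  rw [UnitAddTorus.mFourierCoeff, integral_unitAddTorus_eq_setIntegral_unitCube]
  simp only [mFourier_torusMk, hg.lift_torusMk hc]
  rfl

theorem exists_norm_fourierCoefficient_le (hg : IsZPeriodic g) (hc : Continuous g) :
    ∃ C, ∀ k, ‖fourierCoefficient g k‖ ≤ C := by
  obtain ⟨C, hC⟩ := hg.exists_norm_le hc
  refine ⟨C * volume.real (unitCube ι), fun k =>
    norm_setIntegral_le_of_norm_le_const isCompact_unitCube.measure_lt_top fun x _ => ?_⟩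
  rw [norm_smul, norm_exp_phase, one_mul]
  exact hC x

theorem fourierCoefficient_fderiv_apply (hg : IsZPeriodic g) (hs : ContDiff ℝ 1 g)
    (v : EuclideanSpace ℝ ι) (k : ι → ℤ) :
    fourierCoefficient (fun x => fderiv ℝ g x v) k = phase k v • fourierCoefficient g k := by
  let h (x : EuclideanSpace ℝ ι) : F := Complex.exp (phase (-k) x) • g x
  have h_periodic : IsZPeriodic h := fun x l =>
    congrArg₂ (· • ·) (isZPeriodic_exp_phase (-k) x l) (hg x l)
  have h_contDiff : ContDiff ℝ 1 h := (phase (-k)).contDiff.cexp.smul hs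
  have fderiv_h (x : EuclideanSpace ℝ ι) : fderiv ℝ h x v =
      Complex.exp (phase (-k) x) • fderiv ℝ g x v - phase k v • h x := by
    have hasFDerivAt_h := (hasFDerivAt_exp_phase (-k) x).fun_smul
      (hs.differentiable one_ne_zero x).hasFDerivAt
    rw [hasFDerivAt_h.fderiv]
    simp [h, phase_neg, smul_smul, mul_comm, sub_eq_add_neg]
  have mode_smul_continuous :
      Continuous fun x => Complex.exp (phase (-k) x) • fderiv ℝ g x v :=
    (phase (-k)).continuous.cexp.smul
      ((hs.continuous_fderiv one_ne_zero).clm_apply continuous_const)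
  have smul_h_continuous : Continuous fun x => phase k v • h x :=
    continuous_const.smul h_contDiff.continuous
  have integral_eq_zero := h_periodic.setIntegral_unitCube_fderiv_apply h_contDiff v
  simp only [fderiv_h] at integral_eq_zero
  rw [integral_sub (integrableOn_unitCube mode_smul_continuous)
    (integrableOn_unitCube smul_h_continuous), integral_smul] at integral_eq_zero
  exact sub_eq_zero.1 integral_eq_zero

theorem rapidlyDecreasing_fourierCoefficient (hg : IsZPeriodic g) (hs : ContDiff ℝ ∞ g) :
    RapidlyDecreasing (fourierCoefficient g) := fun N => by
  induction N generalizing g with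
  | zero =>
    obtain ⟨C, hC⟩ := hg.exists_norm_fourierCoefficient_le hs.continuous
    exact ⟨C, fun k => by simpa only [pow_zero, one_mul] using hC k⟩
  | succ N ih =>
    classical
    let e (i : ι) : EuclideanSpace ℝ ι := EuclideanSpace.single i 1
    choose C hC using fun i => ih (hg.fderiv_apply (e i))
      ((hs.fderiv_right (m := ∞) le_rfl).clm_apply contDiff_const)
    have abs_mul_norm_le (k : ι → ℤ) (i : ι) : |(k i : ℝ)| * ‖fourierCoefficient g k‖ ≤
        ‖fourierCoefficient (fun x => fderiv ℝ g x (e i)) k‖ := by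
      rw [hg.fourierCoefficient_fderiv_apply (hs.of_le (by simp)), norm_smul, norm_phase_apply,
        inner_latticeVec]
      have inner_e : ∑ j, e i j * (k j : ℝ) = k i := by simp [e, PiLp.single_apply]
      rw [inner_e]
      gcongr
      exact le_mul_of_one_le_left (abs_nonneg _) (by linarith [Real.pi_gt_three])
    refine ⟨∑ i, C i, fun k => ?_⟩
    calc ‖latticeVec k‖ ^ (N + 1) * ‖fourierCoefficient g k‖
        = ‖latticeVec k‖ ^ N * (‖latticeVec k‖ * ‖fourierCoefficient g k‖) := by ring
      _ ≤ ‖latticeVec k‖ ^ N * ((∑ i, |(k i : ℝ)|) * ‖fourierCoefficient g k‖) := by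
        gcongr; exact norm_latticeVec_le_sum_abs k
      _ = ∑ i, ‖latticeVec k‖ ^ N * (|(k i : ℝ)| * ‖fourierCoefficient g k‖) := by
        rw [Finset.sum_mul, Finset.mul_sum]
      _ ≤ ∑ i, C i := by
        gcongr with i
        exact (mul_le_mul_of_nonneg_left (abs_mul_norm_le k i) (by positivity)).trans (hC i k)

end Coefficients

theorem fourierSeries_fourierCoefficient {g : EuclideanSpace ℝ ι → ℂ} (hg : IsZPeriodic g)
    (hc : Continuous g) (hsum : Summable (fourierCoefficient g)) :
    fourierSeries (fourierCoefficient g) = g := by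
  have coeff_lift : UnitAddTorus.mFourierCoeff (hg.lift hc) = fourierCoefficient g :=
    funext (hg.mFourierCoeff_lift hc)
  ext x
  rw [← hg.lift_torusMk hc, ← (UnitAddTorus.hasSum_mFourier_series_apply_of_summable
    (coeff_lift ▸ hsum) (torusMk x)).tsum_eq, coeff_lift]
  simp only [fourierSeries, mFourier_torusMk, smul_eq_mul, mul_comm]

end IsZPeriodic

end FourierCoefficients

section CohomologicalEquation

theorem RapidlyDecreasing.inv_phase_smul [NormedAddCommGroup F] [NormedSpace ℂ F]
    {p : EuclideanSpace ℝ ι} (hp : IsDiophantine p) {c : (ι → ℤ) → F} (hc : RapidlyDecreasing c) :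
    RapidlyDecreasing fun k => (phase k p)⁻¹ • c k := by
  obtain ⟨B, M, hB⟩ := hp.exists_inv_abs_inner_le
  refine hc.of_norm_le (B := (2 * Real.pi)⁻¹ * B) (M := M) fun k => ?_
  rw [norm_smul, norm_inv, norm_phase_apply, mul_inv, mul_assoc _ B]
  gcongr
  exact hB k

theorem IsDiophantine.fderiv_fourierSeries_inv_phase_smul [NormedAddCommGroup F] [NormedSpace ℂ F]
    [CompleteSpace F] {p : EuclideanSpace ℝ ι} (hp : IsDiophantine p) {c : (ι → ℤ) → F}
    (hc : RapidlyDecreasing c) (hc₀ : c 0 = 0) (x : EuclideanSpace ℝ ι) :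
    fderiv ℝ (fourierSeries fun k => (phase k p)⁻¹ • c k) x p = fourierSeries c x := by
  rw [(hc.inv_phase_smul hp).fderiv_fourierSeries_apply]
  congr 1
  funext k
  obtain rfl | hk := eq_or_ne k 0
  · simp only [hc₀, smul_zero]
  · refine smul_inv_smul₀ (norm_pos_iff.1 ?_) _
    rw [norm_phase_apply]
    have := abs_pos.2 (hp.inner_ne_zero hk)
    positivity

theorem IsDiophantine.exists_fderiv_apply_eq_complex {p : EuclideanSpace ℝ ι}
    (hp : IsDiophantine p) {f : EuclideanSpace ℝ ι → ℂ} (hf : ContDiff ℝ ∞ f)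
    (hper : IsZPeriodic f) (hmean : ∫ x in unitCube ι, f x = 0) :
    ∃ φ : EuclideanSpace ℝ ι → ℂ, ContDiff ℝ ∞ φ ∧ IsZPeriodic φ ∧ ∀ x, fderiv ℝ φ x p = f x := by
  have hc := hper.rapidlyDecreasing_fourierCoefficient hf
  refine ⟨fourierSeries fun k => (phase k p)⁻¹ • fourierCoefficient f k,
    (hc.inv_phase_smul hp).contDiff_fourierSeries, isZPeriodic_fourierSeries _, fun x => ?_⟩
  rw [hp.fderiv_fourierSeries_inv_phase_smul hc ((fourierCoefficient_zero f).trans hmean),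
    hper.fourierSeries_fourierCoefficient hf.continuous hc.summable_norm.of_norm]

end CohomologicalEquation

theorem statement13_general {𝕜 : Type*} [RCLike 𝕜] {p : EuclideanSpace ℝ ι}
    (hp : IsDiophantine p) {f : EuclideanSpace ℝ ι → 𝕜} (hf : ContDiff ℝ ∞ f)
    (hper : IsZPeriodic f) (hmean : ∫ x in unitCube ι, f x = 0) :
    ∃ φ : EuclideanSpace ℝ ι → 𝕜, ContDiff ℝ ∞ φ ∧ IsZPeriodic φ ∧ ∀ x, fderiv ℝ φ x p = f x := by
  let toComplex := RCLike.map 𝕜 ℂ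
  let ofComplex := RCLike.map ℂ 𝕜
  have ofComplex_toComplex (z : 𝕜) : ofComplex (toComplex z) = z := by
    simp [toComplex, ofComplex, RCLike.map_apply, RCLike.re_add_im]
  obtain ⟨φ, hφ, φ_periodic, hφp⟩ := hp.exists_fderiv_apply_eq_complex (f := toComplex ∘ f)
    (toComplex.contDiff.comp hf) (fun x k => congrArg toComplex (hper x k))
    (by rw [← map_zero toComplex, ← hmean]
        exact toComplex.integral_comp_comm (integrableOn_unitCube hf.continuous))
  refine ⟨ofComplex ∘ φ, ofComplex.contDiff.comp hφ,
    fun x k => congrArg ofComplex (φ_periodic x k), fun x => ?_⟩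
  have φ_differentiable : DifferentiableAt ℝ φ x := hφ.differentiable (by simp) x
  rw [(ofComplex.hasFDerivAt.comp x φ_differentiable.hasFDerivAt).fderiv,
    ContinuousLinearMap.comp_apply, hφp, Function.comp_apply, ofComplex_toComplex]

end

/-- If `p ∈ ℝⁿ` satisfies a Diophantine condition and `f` is smooth,
`ℤⁿ`-periodic with zero mean over the unit cube, then the equation `p·∇φ = f` has a
smooth `ℤⁿ`-periodic solution `φ`. -/
theorem statement13 {n : ℕ} (hn : 1 ≤ n) (p : EuclideanSpace ℝ (Fin n))
    (hdio : ∃ c > (0:ℝ), ∃ γ > (0:ℝ), ∀ k : Fin n → ℤ, k ≠ 0 →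
      |∑ i, p i * (k i : ℝ)| ≥ c / (Real.sqrt (∑ i, ((k i : ℝ)) ^ 2)) ^ γ)
    (f : EuclideanSpace ℝ (Fin n) → ℝ) (hf : ContDiff ℝ (⊤ : ℕ∞) f)
    (hper : ∀ (x : EuclideanSpace ℝ (Fin n)) (k : Fin n → ℤ),
      f (x + (WithLp.equiv 2 (Fin n → ℝ)).symm fun i => (k i : ℝ)) = f x)
    (hmean :
      (∫ x in {x : EuclideanSpace ℝ (Fin n) | ∀ i, x i ∈ Set.Icc (0:ℝ) 1}, f x) = 0) :
    ∃ φ : EuclideanSpace ℝ (Fin n) → ℝ, ContDiff ℝ (⊤ : ℕ∞) φ ∧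
      (∀ (x : EuclideanSpace ℝ (Fin n)) (k : Fin n → ℤ),
        φ (x + (WithLp.equiv 2 (Fin n → ℝ)).symm fun i => (k i : ℝ)) = φ x) ∧
      ∀ x, ⟪p, gradient φ x⟫ = f x := by
  obtain ⟨φ, hφ, φ_periodic, hφp⟩ :=
    statement13_general ((isDiophantine_iff p).2 hdio) hf hper hmean
  exact ⟨φ, hφ, φ_periodic, fun x => by rw [inner_gradient_right, conj_trivial, hφp]⟩
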